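/- Character property of the interval-partition signature: for all 𝔏, 𝔰, 𝔱 ∈ IPs, ⟨IPC(𝔏), 𝔰⟩ · ⟨IPC(𝔏), 𝔱⟩ = Σ_{𝔤 ∈ IPs} c(𝔰,𝔱;𝔤) · ⟨IPC(𝔏), 𝔤⟩, where only finitely many summands are nonzero. -/

import Mathlib

/-!
Both sides count the pairs `(A, A')` of subsets of the ground set of `L` with `std(L(A)) ≥ s` and
`std(L(A')) ≥ t`.

Since `L(A)` is the coarsest interval partition of `A` refining `L`, the condition
`std(L(A)) ≥ s` says that `A` carries an interval partition `I` which refines `L` and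
standardizes to `s` (`mem_IPC_iff`); this `I` is determined by `A` and `s` (`eq_pull`). For a pair
`(A, A')` with partitions `I` and `I'`, the gluing `G` of `I` and `I'` is an interval partition of
`C = A ∪ A'` (`isIntervalPartition_glue`) and still refines `L` (`refines_glue`). The pairs are
sorted according to `g = std G` (`glueType`).

For fixed `g`, relabelling along the increasing bijection between `C` and `{1, …, |C|}` turns
`(A, A')` into a pair `(a, a')` counted by `c(s, t; g)`, while `C` is counted by `⟨IPC(L), g⟩`.
Conversely, `C` and `(a, a')` determine `(A, A')`: blocks over `a` and `a'` lie in blocks of `g`,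
which pull back to intervals of `C` inside blocks of `L`, hence so do their sub-intervals. As
gluing and standardization commute with increasing relabelling (`glue_mapF`, `stdIP_mapF`), this
is a bijection (`bijOn_lift`), and summing over the finitely many occurring `g` gives the identity.
-/

open Set

/-- A block: a nonempty interval of consecutive positive integers. -/
def IsIntervalBlock (B : Set ℕ) : Prop :=
  B.Nonempty ∧ (∀ x ∈ B, 1 ≤ x) ∧
    ∀ x ∈ B, ∀ z ∈ B, ∀ y : ℕ, x ≤ y → y ≤ z → y ∈ B

/-- An interval partition of a finite subset of the positive integers:
a family of pairwise disjoint nonempty intervals with finite ground set. -/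
def IsIntervalPartition (P : Set (Set ℕ)) : Prop :=
  (⋃₀ P).Finite ∧ (∀ B ∈ P, IsIntervalBlock B) ∧
    ∀ B ∈ P, ∀ C ∈ P, B ≠ C → B ∩ C = ∅

/-- An interval partition with prescribed ground set `A`. -/
def IsIntervalPartitionOf (P : Set (Set ℕ)) (A : Set ℕ) : Prop :=
  IsIntervalPartition P ∧ ⋃₀ P = A

/-- Standardized interval partitions: interval partitions of `{1, …, n}`. -/
def IsStdIP (P : Set (Set ℕ)) : Prop :=
  IsIntervalPartition P ∧ ∃ n : ℕ, ⋃₀ P = Set.Icc 1 n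

/-- Refinement order: same ground set, and every block of `P`
is contained in some block of `Q`. -/
def IPle (P Q : Set (Set ℕ)) : Prop :=
  ⋃₀ P = ⋃₀ Q ∧ ∀ B ∈ P, ∃ C ∈ Q, B ⊆ C

/-- The equivalence relation on blocks generated by having nonempty
intersection (among members of `S`). -/
def glueRel (S : Set (Set ℕ)) : Set ℕ → Set ℕ → Prop :=
  Relation.EqvGen fun X Y => X ∈ S ∧ Y ∈ S ∧ (X ∩ Y).Nonempty

/-- Gluing of two interval partitions. -/
def glue (P Q : Set (Set ℕ)) : Set (Set ℕ) :=
  (fun T => ⋃₀ {X ∈ P ∪ Q | glueRel (P ∪ Q) T X}) '' (P ∪ Q)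

/-- The relation on `A` generated by `y = x + 1`. -/
def cliqueRel (A : Set ℕ) : ℕ → ℕ → Prop :=
  Relation.EqvGen fun x y => x ∈ A ∧ y ∈ A ∧ y = x + 1

/-- `cliques A`: the coarsest interval partition of `A`. -/
def cliques (A : Set ℕ) : Set (Set ℕ) :=
  (fun x => {y ∈ A | cliqueRel A x y}) '' A

/-- `𝓘(A)`: the interval partition of `A ∩ ⋃₀ 𝓘` induced by `𝓘`. -/
def restrictIP (P : Set (Set ℕ)) (A : Set ℕ) : Set (Set ℕ) :=
  {Z | Z ≠ ∅ ∧ ∃ B ∈ P, ∃ c ∈ cliques A, Z = B ∩ c}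

/-- The unique order preserving map sending a finite `S ⊆ ℕ` onto `{1,…,|S|}`. -/
noncomputable def stdMap (S : Set ℕ) (x : ℕ) : ℕ := {y ∈ S | y ≤ x}.ncard

/-- Standardization of an interval partition. -/
noncomputable def stdIP (P : Set (Set ℕ)) : Set (Set ℕ) :=
  (fun B => stdMap (⋃₀ P) '' B) '' P

/-- Shifting all blocks of a partition up by `m`. -/
def shiftIP (m : ℕ) (P : Set (Set ℕ)) : Set (Set ℕ) :=
  (fun B => (fun x => x + m) '' B) '' P

/-- Concatenation of standardized interval partitions. -/
noncomputable def concatIP (P Q : Set (Set ℕ)) : Set (Set ℕ) :=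
  P ∪ shiftIP (⋃₀ P).ncard Q

/-- Quasi-shuffle section coefficient `c(𝔰,𝔱;𝔤)`. -/
noncomputable def secCoeff (s t g : Set (Set ℕ)) : ℕ :=
  {p : Set ℕ × Set ℕ | p.1 ∪ p.2 = ⋃₀ g ∧
      ∃ I I' : Set (Set ℕ), IsIntervalPartitionOf I p.1 ∧ IsIntervalPartitionOf I' p.2 ∧
        stdIP I = s ∧ stdIP I' = t ∧ glue I I' = g}.ncard

/-- The signature pairing `⟨IPC(𝔏), 𝔰⟩`. -/
noncomputable def IPC (L s : Set (Set ℕ)) : ℕ :=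
  {A : Set ℕ | A ⊆ ⋃₀ L ∧ IPle s (stdIP (restrictIP L A))}.ncard

open Classical in
/-- The unique refinement `𝓘_𝔰` of `𝓘` with standardization `𝔰` (junk value otherwise). -/
noncomputable def refineTo (P s : Set (Set ℕ)) : Set (Set ℕ) :=
  if h : ∃ Q : Set (Set ℕ), IsIntervalPartition Q ∧ IPle Q P ∧ stdIP Q = s then h.choose
  else ∅

/-- The concatenation of single blocks of the sizes listed in `l`. -/
noncomputable def concatList (l : List ℕ) : Set (Set ℕ) :=
  l.foldl (fun acc m => concatIP acc {Set.Icc 1 m}) ∅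

/-- A permutation of `{1,…,n}`, encoded as a function on `ℕ` fixing everything else. -/
def IsPermOf (n : ℕ) (σ : ℕ → ℕ) : Prop :=
  Set.BijOn σ (Set.Icc 1 n) (Set.Icc 1 n) ∧ ∀ x : ℕ, x ∉ Set.Icc 1 n → σ x = x

open Classical in
/-- The `i`-th smallest element of `A` (junk value otherwise). -/
noncomputable def nthElt (A : Set ℕ) (i : ℕ) : ℕ :=
  if h : ∃ x ∈ A, stdMap A x = i then h.choose else 0

/-- Standardization `st(Λ|_A)` of `Λ` restricted to `A`: the permutation of `{1,…,|A|}`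
recording the relative order of the values of `Λ` on `A`. -/
noncomputable def stdRestrict (lam : ℕ → ℕ) (A : Set ℕ) : ℕ → ℕ := fun i =>
  if 1 ≤ i ∧ i ≤ A.ncard then {b ∈ A | lam b ≤ lam (nthElt A i)}.ncard else i

/-- Concatenation `σ ⊡ τ` of permutations of `{1,…,m}` and `{1,…,n}`. -/
def permConcat (m n : ℕ) (σ τ : ℕ → ℕ) : ℕ → ℕ := fun i =>
  if 1 ≤ i ∧ i ≤ m then σ i
  else if m + 1 ≤ i ∧ i ≤ m + n then τ (i - m) + m
  else i

/-- A vincular pattern: a standardized interval partition of `{1,…,n}`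
together with a permutation of `{1,…,n}`. -/
def IsVincular (p : Set (Set ℕ) × (ℕ → ℕ)) : Prop :=
  ∃ n : ℕ, IsIntervalPartitionOf p.1 (Set.Icc 1 n) ∧ IsPermOf n p.2

/-- Concatenation of vincular patterns. -/
noncomputable def vincConcat (p q : Set (Set ℕ) × (ℕ → ℕ)) : Set (Set ℕ) × (ℕ → ℕ) :=
  (concatIP p.1 q.1, permConcat (⋃₀ p.1).ncard (⋃₀ q.1).ncard p.2 q.2)

/-- Vincular section coefficient `C((𝔰,σ),(𝔱,τ);(𝔤,γ))`. -/
noncomputable def vincCoeff (p q r : Set (Set ℕ) × (ℕ → ℕ)) : ℕ :=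
  {AB : Set ℕ × Set ℕ | AB.1 ∪ AB.2 = ⋃₀ r.1 ∧
      (∃ I I' : Set (Set ℕ), IsIntervalPartitionOf I AB.1 ∧ IsIntervalPartitionOf I' AB.2 ∧
        stdIP I = p.1 ∧ stdIP I' = q.1 ∧ glue I I' = r.1) ∧
      stdRestrict r.2 AB.1 = p.2 ∧ stdRestrict r.2 AB.2 = q.2}.ncard

/-- Vincular signature pairing `⟨GPC(𝔏,Λ), (𝔰,σ)⟩`. -/
noncomputable def GPC (L : Set (Set ℕ)) (lam : ℕ → ℕ) (p : Set (Set ℕ) × (ℕ → ℕ)) : ℕ :=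
  {A : Set ℕ | A ⊆ ⋃₀ L ∧ IPle p.1 (stdIP (restrictIP L A)) ∧ stdRestrict lam A = p.2}.ncard

/-! ### Transport of set families -/

/-- The family of images `f '' B` of the members of `P`. -/
def mapF (f : ℕ → ℕ) (P : Set (Set ℕ)) : Set (Set ℕ) := (fun B => f '' B) '' P

/-- Every member of `P` is contained in a member of `L`. -/
def Refines (P L : Set (Set ℕ)) : Prop := ∀ B ∈ P, ∃ C ∈ L, B ⊆ C

lemma stdIP_eq (P : Set (Set ℕ)) : stdIP P = mapF (stdMap (⋃₀ P)) P := rfl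

lemma sUnion_mapF (f : ℕ → ℕ) (P : Set (Set ℕ)) : ⋃₀ mapF f P = f '' ⋃₀ P := by
  ext x
  simp only [mapF, mem_sUnion, mem_image]
  constructor
  · rintro ⟨_, ⟨B, hB, rfl⟩, y, hy, rfl⟩
    exact ⟨y, ⟨B, hB, hy⟩, rfl⟩
  · rintro ⟨y, ⟨B, hB, hy⟩, rfl⟩
    exact ⟨_, ⟨B, hB, rfl⟩, y, hy, rfl⟩

lemma mapF_union (f : ℕ → ℕ) (P Q : Set (Set ℕ)) :
    mapF f (P ∪ Q) = mapF f P ∪ mapF f Q := image_union _ _ _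

lemma mapF_comp_eqOn {f h k : ℕ → ℕ} {P : Set (Set ℕ)}
    (H : ∀ x ∈ ⋃₀ P, h (f x) = k x) : mapF h (mapF f P) = mapF k P := by
  simp only [mapF, image_image]
  refine image_congr fun B hB => ?_
  exact image_congr fun x hx => H x ⟨B, hB, hx⟩

lemma mapF_eq_self {f : ℕ → ℕ} {P : Set (Set ℕ)} (H : ∀ x ∈ ⋃₀ P, f x = x) :
    mapF f P = P := by
  have : ∀ B ∈ P, f '' B = B := fun B hB => by
    conv_rhs => rw [← image_id B]
    exact image_congr fun x hx => H x ⟨B, hB, hx⟩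
  unfold mapF
  conv_rhs => rw [← image_id P]
  exact image_congr this

lemma mapF_leftInv {f h : ℕ → ℕ} {P : Set (Set ℕ)}
    (H : ∀ x ∈ ⋃₀ P, h (f x) = x) : mapF h (mapF f P) = P := by
  rw [mapF_comp_eqOn (k := id) H]
  exact mapF_eq_self fun _ _ => rfl

/-- Transport of an interval partition along an injection that sends blocks to intervals. -/
lemma isIntervalPartition_mapF {f : ℕ → ℕ} {P : Set (Set ℕ)} (hP : IsIntervalPartition P)
    (hf : InjOn f (⋃₀ P)) (hb : ∀ B ∈ P, IsIntervalBlock (f '' B)) :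
    IsIntervalPartition (mapF f P) := by
  refine ⟨?_, ?_, ?_⟩
  · rw [sUnion_mapF]
    exact hP.1.image _
  · rintro _ ⟨B, hB, rfl⟩
    exact hb B hB
  · rintro _ ⟨B, hB, rfl⟩ _ ⟨C, hC, rfl⟩ hne
    have hBC : B ≠ C := fun h => hne (by rw [h])
    dsimp only
    rw [← hf.image_inter (subset_sUnion_of_mem hB) (subset_sUnion_of_mem hC),
      hP.2.2 B hB C hC hBC, image_empty]

/-! ### The standardization map -/

lemma stdMap_strictMonoOn {S : Set ℕ} (hS : S.Finite) : StrictMonoOn (stdMap S) S := by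
  intro x _ y hy hxy
  refine ncard_lt_ncard ?_ (hS.subset (sep_subset _ _))
  refine ssubset_iff_exists.2 ⟨fun z hz => ⟨hz.1, hz.2.trans hxy.le⟩, y, ⟨hy, le_rfl⟩, ?_⟩
  exact fun h => absurd h.2 (not_le.2 hxy)

lemma stdMap_image {S : Set ℕ} (hS : S.Finite) : stdMap S '' S = Icc 1 S.ncard := by
  refine eq_of_subset_of_ncard_le ?_ ?_ (finite_Icc _ _)
  · rintro _ ⟨x, hx, rfl⟩
    refine ⟨?_, ncard_le_ncard (sep_subset _ _) hS⟩
    exact (ncard_pos (hS.subset (sep_subset _ _))).2 ⟨x, hx, le_rfl⟩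
  · rw [InjOn.ncard_image (stdMap_strictMonoOn hS).injOn]
    simp [ncard_eq_toFinset_card']

lemma stdMap_map {S : Set ℕ} {k : ℕ → ℕ} (hk : StrictMonoOn k S) {x : ℕ} (hx : x ∈ S) :
    stdMap (k '' S) (k x) = stdMap S x := by
  have : {y ∈ k '' S | y ≤ k x} = k '' {y ∈ S | y ≤ x} := by
    ext z
    constructor
    · rintro ⟨⟨y, hy, rfl⟩, h⟩
      exact ⟨y, ⟨hy, (hk.le_iff_le hy hx).1 h⟩, rfl⟩
    · rintro ⟨y, ⟨hy, h⟩, rfl⟩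
      exact ⟨⟨y, hy, rfl⟩, (hk.le_iff_le hy hx).2 h⟩
  unfold stdMap
  rw [this, InjOn.ncard_image (hk.injOn.mono (sep_subset _ _))]

lemma stdMap_Icc {n x : ℕ} (hx : x ∈ Icc 1 n) : stdMap (Icc 1 n) x = x := by
  have : {y ∈ Icc 1 n | y ≤ x} = Icc 1 x := by
    ext y
    constructor
    · exact fun h => ⟨h.1.1, h.2⟩
    · exact fun h => ⟨⟨h.1, h.2.trans hx.2⟩, h.2⟩
  unfold stdMap
  rw [this]
  simp [ncard_eq_toFinset_card']

/-- Standardization is invariant under increasing relabelling. -/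
lemma stdIP_mapF {P : Set (Set ℕ)} {k : ℕ → ℕ} (hk : StrictMonoOn k (⋃₀ P)) :
    stdIP (mapF k P) = stdIP P := by
  rw [stdIP_eq, sUnion_mapF, stdIP_eq]
  exact mapF_comp_eqOn fun x hx => stdMap_map hk hx

lemma stdIP_self {s : Set (Set ℕ)} (hs : IsStdIP s) : stdIP s = s := by
  obtain ⟨-, n, hn⟩ := hs
  rw [stdIP_eq, hn]
  exact mapF_eq_self fun x hx => stdMap_Icc (hn ▸ hx)

/-- The standardization map of a finite set sends intervals inside it to intervals. -/
lemma isIntervalBlock_stdMap_image {S B : Set ℕ} (hS : S.Finite) (hB : IsIntervalBlock B)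
    (hBS : B ⊆ S) : IsIntervalBlock (stdMap S '' B) := by
  have him : ∀ x ∈ B, stdMap S x ∈ Icc 1 S.ncard := fun x hx =>
    stdMap_image hS ▸ mem_image_of_mem _ (hBS hx)
  refine ⟨hB.1.image _, ?_, ?_⟩
  · rintro _ ⟨x, hx, rfl⟩
    exact (him x hx).1
  · rintro _ ⟨x, hx, rfl⟩ _ ⟨z, hz, rfl⟩ y h1 h2
    have hy : y ∈ stdMap S '' S := by
      rw [stdMap_image hS]
      exact ⟨(him x hx).1.trans h1, h2.trans (him z hz).2⟩
    obtain ⟨w, hw, rfl⟩ := hy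
    have hm := stdMap_strictMonoOn hS
    exact ⟨w, hB.2.2 x hx z hz w ((hm.le_iff_le (hBS hx) hw).1 h1)
      ((hm.le_iff_le hw (hBS hz)).1 h2), rfl⟩

lemma isIntervalPartition_mapF_stdMap {P : Set (Set ℕ)} {S : Set ℕ} (hP : IsIntervalPartition P)
    (hS : S.Finite) (hPS : ⋃₀ P ⊆ S) : IsIntervalPartition (mapF (stdMap S) P) :=
  isIntervalPartition_mapF hP ((stdMap_strictMonoOn hS).injOn.mono hPS) fun B hB =>
    isIntervalBlock_stdMap_image hS (hP.2.1 B hB) ((subset_sUnion_of_mem hB).trans hPS)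

lemma isStdIP_stdIP {P : Set (Set ℕ)} (hP : IsIntervalPartition P) : IsStdIP (stdIP P) :=
  ⟨isIntervalPartition_mapF_stdMap hP hP.1 subset_rfl, _,
    (sUnion_mapF _ _).trans (stdMap_image hP.1)⟩

/-- An inverse of `stdMap S`, sending `i` to the `i`-th smallest element of `S`. -/
noncomputable def unstd (S : Set ℕ) : ℕ → ℕ := Function.invFunOn (stdMap S) S

lemma unstd_stdMap {S : Set ℕ} (hS : S.Finite) {x : ℕ} (hx : x ∈ S) :
    unstd S (stdMap S x) = x :=
  (stdMap_strictMonoOn hS).injOn.leftInvOn_invFunOn hx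

lemma stdMap_unstd {S : Set ℕ} {i : ℕ} (hi : i ∈ stdMap S '' S) :
    stdMap S (unstd S i) = i := Function.invFunOn_eq hi

lemma unstd_mem {S : Set ℕ} {i : ℕ} (hi : i ∈ stdMap S '' S) : unstd S i ∈ S :=
  Function.invFunOn_mem hi

lemma unstd_strictMonoOn {S : Set ℕ} (hS : S.Finite) :
    StrictMonoOn (unstd S) (stdMap S '' S) := by
  intro i hi j hj hij
  rwa [← (stdMap_strictMonoOn hS).lt_iff_lt (unstd_mem hi) (unstd_mem hj),
    stdMap_unstd hi, stdMap_unstd hj]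

lemma unstd_image_stdMap_image {S A : Set ℕ} (hS : S.Finite) (hA : A ⊆ S) :
    unstd S '' (stdMap S '' A) = A := by
  rw [image_image]
  conv_rhs => rw [← image_id A]
  exact image_congr fun x hx => unstd_stdMap hS (hA hx)

lemma stdMap_image_unstd_image {S a : Set ℕ} (ha : a ⊆ stdMap S '' S) :
    stdMap S '' (unstd S '' a) = a := by
  rw [image_image]
  conv_rhs => rw [← image_id a]
  exact image_congr fun x hx => stdMap_unstd (ha hx)

/-- An interval stays an interval under `unstd S` as soon as its image lies in an interval
`D ⊆ S`. -/
lemma isIntervalBlock_unstd_image {S B D : Set ℕ} (hS : S.Finite) (hB : IsIntervalBlock B)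
    (hD : IsIntervalBlock D) (hDS : D ⊆ S) (hBD : B ⊆ stdMap S '' D) :
    IsIntervalBlock (unstd S '' B) := by
  have hsub : unstd S '' B ⊆ D := by
    rw [← unstd_image_stdMap_image hS hDS]
    exact image_mono hBD
  have hB' : B ⊆ stdMap S '' S := hBD.trans (image_mono hDS)
  refine ⟨hB.1.image _, fun x hx => hD.2.1 x (hsub hx), ?_⟩
  intro x hx z hz y h1 h2
  have hy := hD.2.2 x (hsub hx) z (hsub hz) y h1 h2
  have hm := (stdMap_strictMonoOn hS).monotoneOn
  have key : ∀ x ∈ unstd S '' B, stdMap S x ∈ B := fun x hx => by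
    rw [← stdMap_image_unstd_image hB']
    exact mem_image_of_mem _ hx
  refine ⟨stdMap S y, ?_, unstd_stdMap hS (hDS hy)⟩
  exact hB.2.2 _ (key x hx) _ (key z hz) _ (hm (hDS (hsub hx)) (hDS hy) h1)
    (hm (hDS hy) (hDS (hsub hz)) h2)

/-- The only candidate for an interval partition of `A` with standardization `s`. -/
noncomputable def pull (A : Set ℕ) (s : Set (Set ℕ)) : Set (Set ℕ) := mapF (unstd A) s

lemma eq_pull {A : Set ℕ} {s I : Set (Set ℕ)} (hI : IsIntervalPartitionOf I A)
    (hs : stdIP I = s) : I = pull A s := by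
  obtain ⟨hI, rfl⟩ := hI
  rw [← hs, pull, stdIP_eq, mapF_leftInv fun x hx => unstd_stdMap hI.1 hx]

/-! ### Gluing -/

lemma glueRel_map (f : ℕ → ℕ) {S : Set (Set ℕ)} {X Y : Set ℕ} (h : glueRel S X Y) :
    glueRel (mapF f S) (f '' X) (f '' Y) := by
  induction h with
  | rel X Y h =>
    obtain ⟨hX, hY, x, hx, hy⟩ := h
    exact .rel _ _ ⟨⟨X, hX, rfl⟩, ⟨Y, hY, rfl⟩, f x, ⟨x, hx, rfl⟩, ⟨x, hy, rfl⟩⟩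
  | refl X => exact .refl _
  | symm X Y _ ih => exact ih.symm
  | trans X Y Z _ _ ih1 ih2 => exact ih1.trans _ _ _ ih2

/-- Gluing commutes with relabelling along a map injective on the ground set. -/
lemma glue_mapF {f : ℕ → ℕ} {P Q : Set (Set ℕ)} (hf : InjOn f (⋃₀ (P ∪ Q))) :
    glue (mapF f P) (mapF f Q) = mapF f (glue P Q) := by
  have hinv : ∀ x ∈ ⋃₀ (P ∪ Q), Function.invFunOn f (⋃₀ (P ∪ Q)) (f x) = x :=
    fun x hx => hf.leftInvOn_invFunOn hx
  have hinv' : ∀ X ∈ P ∪ Q, Function.invFunOn f (⋃₀ (P ∪ Q)) '' (f '' X) = X := fun X hX => by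
    rw [image_image]
    conv_rhs => rw [← image_id X]
    exact image_congr fun x hx => hinv x ⟨X, hX, hx⟩
  have hrel : ∀ X ∈ P ∪ Q, ∀ Y ∈ P ∪ Q,
      (glueRel (mapF f (P ∪ Q)) (f '' X) (f '' Y) ↔ glueRel (P ∪ Q) X Y) := by
    intro X hX Y hY
    refine ⟨fun h => ?_, glueRel_map f⟩
    have := glueRel_map (Function.invFunOn f (⋃₀ (P ∪ Q))) h
    rwa [mapF_leftInv hinv, hinv' X hX, hinv' Y hY] at this
  unfold glue
  rw [← mapF_union]
  conv_lhs => rw [mapF]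
  conv_rhs => rw [mapF]
  rw [image_image, image_image]
  refine image_congr fun T hT => ?_
  have : {X | X ∈ mapF f (P ∪ Q) ∧ glueRel (mapF f (P ∪ Q)) (f '' T) X}
      = mapF f {X | X ∈ P ∪ Q ∧ glueRel (P ∪ Q) T X} := by
    ext Z
    constructor
    · rintro ⟨⟨X, hX, rfl⟩, h⟩
      exact ⟨X, ⟨hX, (hrel T hT X hX).1 h⟩, rfl⟩
    · rintro ⟨X, ⟨hX, h⟩, rfl⟩
      exact ⟨⟨X, hX, rfl⟩, (hrel T hT X hX).2 h⟩
  exact (congrArg sUnion this).trans (sUnion_mapF _ _)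

lemma glueRel_mem {S : Set (Set ℕ)} {X Y : Set ℕ} (h : glueRel S X Y) : X ∈ S ↔ Y ∈ S := by
  induction h with
  | rel X Y h => exact iff_of_true h.1 h.2.1
  | refl X => rfl
  | symm X Y _ ih => exact ih.symm
  | trans X Y Z _ _ ih1 ih2 => exact ih1.trans ih2

/-- Chains of intersecting intervals leave no gap. -/
lemma glueRel_between {S : Set (Set ℕ)} (hS : ∀ B ∈ S, IsIntervalBlock B) {X Z : Set ℕ}
    (h : glueRel S X Z) : X ∈ S → ∀ x ∈ X, ∀ z ∈ Z, ∀ y ∈ uIcc x z,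
      ∃ W ∈ S, glueRel S X W ∧ y ∈ W := by
  have conv : ∀ B ∈ S, ∀ x ∈ B, ∀ z ∈ B, ∀ y ∈ uIcc x z, y ∈ B := by
    intro B hB x hx z hz y hy
    rcases mem_uIcc.1 hy with h | h
    · exact (hS B hB).2.2 x hx z hz y h.1 h.2
    · exact (hS B hB).2.2 z hz x hx y h.1 h.2
  induction h with
  | rel X Z h =>
    intro hX x hx z hz y hy
    obtain ⟨w, hwX, hwZ⟩ := h.2.2
    rcases uIcc_subset_uIcc_union_uIcc (b := w) hy with hy | hy
    · exact ⟨X, hX, .refl _, conv X hX x hx w hwX y hy⟩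
    · exact ⟨Z, h.2.1, .rel _ _ h, conv Z h.2.1 w hwZ z hz y hy⟩
  | refl X => exact fun hX x hx z hz y hy => ⟨X, hX, .refl _, conv X hX x hx z hz y hy⟩
  | symm X Z h ih =>
    intro hX x hx z hz y hy
    obtain ⟨W, hW, hr, hyW⟩ := ih ((glueRel_mem h).2 hX) z hz x hx y (uIcc_comm x z ▸ hy)
    exact ⟨W, hW, (h.symm).trans _ _ _ hr, hyW⟩
  | trans X Y Z h1 h2 ih1 ih2 =>
    intro hX x hx z hz y hy
    have hY := (glueRel_mem h1).1 hX
    obtain ⟨w, hw⟩ := (hS Y hY).1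
    rcases uIcc_subset_uIcc_union_uIcc (b := w) hy with hy | hy
    · exact ih1 hX x hx w hw y hy
    · obtain ⟨W, hW, hr, hyW⟩ := ih2 hY w hw z hz y hy
      exact ⟨W, hW, h1.trans _ _ _ hr, hyW⟩

lemma sUnion_glue (P Q : Set (Set ℕ)) : ⋃₀ glue P Q = ⋃₀ P ∪ ⋃₀ Q := by
  rw [← sUnion_union]
  ext x
  constructor
  · rintro ⟨_, ⟨T, hT, rfl⟩, X, ⟨hX, -⟩, hx⟩
    exact ⟨X, hX, hx⟩
  · rintro ⟨X, hX, hx⟩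
    exact ⟨_, ⟨X, hX, rfl⟩, X, ⟨hX, .refl _⟩, hx⟩

lemma refines_glue_left (P Q : Set (Set ℕ)) : Refines P (glue P Q) := fun B hB =>
  ⟨_, ⟨B, .inl hB, rfl⟩, fun _ hx => ⟨B, ⟨.inl hB, .refl _⟩, hx⟩⟩

lemma refines_glue_right (P Q : Set (Set ℕ)) : Refines Q (glue P Q) := fun B hB =>
  ⟨_, ⟨B, .inr hB, rfl⟩, fun _ hx => ⟨B, ⟨.inr hB, .refl _⟩, hx⟩⟩

lemma isIntervalPartition_glue {P Q : Set (Set ℕ)} (hP : IsIntervalPartition P)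
    (hQ : IsIntervalPartition Q) : IsIntervalPartition (glue P Q) := by
  have hS : ∀ B ∈ P ∪ Q, IsIntervalBlock B := fun B hB => hB.elim (hP.2.1 B) (hQ.2.1 B)
  refine ⟨?_, ?_, ?_⟩
  · rw [sUnion_glue]
    exact hP.1.union hQ.1
  · rintro _ ⟨T, hT, rfl⟩
    refine ⟨?_, ?_, ?_⟩
    · obtain ⟨x, hx⟩ := (hS T hT).1
      exact ⟨x, T, ⟨hT, .refl _⟩, hx⟩
    · rintro x ⟨X, ⟨hX, -⟩, hx⟩
      exact (hS X hX).2.1 x hx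
    · rintro x ⟨X, ⟨hX, hTX⟩, hx⟩ z ⟨Z, ⟨hZ, hTZ⟩, hz⟩ y h1 h2
      obtain ⟨W, hW, hr, hyW⟩ := glueRel_between hS ((hTX.symm).trans _ _ _ hTZ) hX x hx z hz y
        (mem_uIcc_of_le h1 h2)
      exact ⟨W, ⟨hW, hTX.trans _ _ _ hr⟩, hyW⟩
  · rintro _ ⟨T, hT, rfl⟩ _ ⟨U, hU, rfl⟩ hne
    by_contra hne'
    obtain ⟨x, ⟨X, ⟨hX, hTX⟩, hx⟩, ⟨Y, ⟨hY, hUY⟩, hy⟩⟩ := nonempty_iff_ne_empty.2 hne'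
    have hTU : glueRel (P ∪ Q) T U :=
      (hTX.trans _ _ _ (.rel _ _ ⟨hX, hY, x, hx, hy⟩)).trans _ _ _ hUY.symm
    refine hne (congrArg sUnion ?_)
    ext Z
    exact ⟨fun h => ⟨h.1, hTU.symm.trans _ _ _ h.2⟩, fun h => ⟨h.1, hTU.trans _ _ _ h.2⟩⟩

/-- The gluing is the join: it refines every partition that both arguments refine. -/
lemma refines_glue {P Q L : Set (Set ℕ)} (hL : IsIntervalPartition L)
    (hPL : Refines P L) (hQL : Refines Q L) : Refines (glue P Q) L := by
  have key : ∀ X Y, glueRel (P ∪ Q) X Y → ∀ C ∈ L, (X ⊆ C ↔ Y ⊆ C) := by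
    have one : ∀ X Y, Y ∈ P ∪ Q → (X ∩ Y).Nonempty → ∀ C ∈ L, X ⊆ C → Y ⊆ C := by
      rintro X Y hY ⟨w, hwX, hwY⟩ C hC hXC
      obtain ⟨C', hC', hYC'⟩ : ∃ C ∈ L, Y ⊆ C := hY.elim (hPL Y) (hQL Y)
      by_cases hCC : C = C'
      · rwa [hCC]
      · have := hL.2.2 C hC C' hC' hCC
        exact absurd (show w ∈ C ∩ C' from ⟨hXC hwX, hYC' hwY⟩) (this ▸ notMem_empty w)
    intro X Y h C hC
    induction h with
    | rel X Y h =>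
      exact ⟨one X Y h.2.1 h.2.2 C hC, one Y X h.1 (inter_comm X Y ▸ h.2.2) C hC⟩
    | refl X => rfl
    | symm X Y _ ih => exact ih.symm
    | trans X Y Z _ _ ih1 ih2 => exact ih1.trans ih2
  rintro _ ⟨T, hT, rfl⟩
  obtain ⟨C, hC, hTC⟩ : ∃ C ∈ L, T ⊆ C := hT.elim (hPL T) (hQL T)
  exact ⟨C, hC, sUnion_subset fun X hX => (key T X hX.2 C hC).1 hTC⟩

/-! ### Cliques and induced partitions -/

lemma cliqueRel_of_Icc {A : Set ℕ} {x z : ℕ} (hxz : x ≤ z) (h : Icc x z ⊆ A) :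
    cliqueRel A x z := by
  induction z, hxz using Nat.le_induction with
  | base => exact .refl _
  | succ z hz ih =>
    refine (ih fun y hy => h ⟨hy.1, hy.2.trans z.le_succ⟩).trans _ _ _ (.rel _ _ ⟨?_, ?_, rfl⟩)
    · exact h ⟨hz, z.le_succ⟩
    · exact h ⟨hz.trans z.le_succ, le_rfl⟩

lemma cliqueRel_mem {A : Set ℕ} {x z : ℕ} (h : cliqueRel A x z) :
    x ∈ A → uIcc x z ⊆ A := by
  have mem : ∀ x z, cliqueRel A x z → (x ∈ A ↔ z ∈ A) := by
    intro x z h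
    induction h with
    | rel X Y h => exact iff_of_true h.1 h.2.1
    | refl X => rfl
    | symm X Y _ ih => exact ih.symm
    | trans X Y Z _ _ ih1 ih2 => exact ih1.trans ih2
  induction h with
  | rel x z h =>
    obtain ⟨hx, hz, rfl⟩ := h
    intro _ y hy
    rw [uIcc_of_le x.le_succ] at hy
    rcases Nat.le_succ_iff.1 hy.2 with h | h
    · rwa [le_antisymm h hy.1]
    · rwa [h]
  | refl x => simp
  | symm x z h ih => exact fun hz => uIcc_comm x z ▸ ih ((mem _ _ h).2 hz)
  | trans x y z h1 _ ih1 ih2 =>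
    exact fun hx => uIcc_subset_uIcc_union_uIcc.trans
      (union_subset (ih1 hx) (ih2 ((mem _ _ h1).1 hx)))

/-- Two points are in the same clique of `A` iff `A` contains everything between them. -/
lemma cliqueRel_iff {A : Set ℕ} {x z : ℕ} (hx : x ∈ A) : cliqueRel A x z ↔ uIcc x z ⊆ A := by
  refine ⟨fun h => cliqueRel_mem h hx, fun h => ?_⟩
  rcases le_total x z with hxz | hxz
  · exact cliqueRel_of_Icc hxz (uIcc_of_le hxz ▸ h)
  · exact (cliqueRel_of_Icc hxz (uIcc_of_ge hxz ▸ h)).symm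

lemma sUnion_restrictIP {L : Set (Set ℕ)} {A : Set ℕ} (hA : A ⊆ ⋃₀ L) :
    ⋃₀ restrictIP L A = A := by
  ext x
  constructor
  · rintro ⟨_, ⟨-, B, -, _, ⟨y, -, rfl⟩, rfl⟩, -, hx⟩
    exact hx.1
  · intro hx
    obtain ⟨B, hB, hxB⟩ := hA hx
    have hx' : x ∈ B ∩ {y | y ∈ A ∧ cliqueRel A x y} := ⟨hxB, hx, .refl _⟩
    exact ⟨_, ⟨nonempty_iff_ne_empty.1 ⟨x, hx'⟩, B, hB, _, ⟨x, hx, rfl⟩, rfl⟩, hx'⟩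

lemma isIntervalBlock_of_mem_restrictIP {L : Set (Set ℕ)} {A D : Set ℕ}
    (hL : IsIntervalPartition L) (hD : D ∈ restrictIP L A) : IsIntervalBlock D := by
  obtain ⟨hne, B, hB, _, ⟨w, hw, rfl⟩, rfl⟩ := hD
  refine ⟨nonempty_iff_ne_empty.2 hne, fun x hx => (hL.2.1 B hB).2.1 x hx.1, ?_⟩
  rintro x ⟨hxB, hxA, hx⟩ z ⟨hzB, hzA, hz⟩ y h1 h2
  have hsub : uIcc x z ⊆ A := (cliqueRel_iff hxA).1 ((hx.symm).trans _ _ _ hz)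
  rw [uIcc_of_le (h1.trans h2)] at hsub
  refine ⟨(hL.2.1 B hB).2.2 x hxB z hzB y h1 h2, hsub ⟨h1, h2⟩, hx.trans _ _ _ ?_⟩
  exact cliqueRel_of_Icc h1 fun v hv => hsub ⟨hv.1, hv.2.trans h2⟩

/-- `restrictIP L A` is the coarsest interval partition of `A` refining `L`. -/
lemma refines_restrictIP {L I : Set (Set ℕ)} {A : Set ℕ} (hI : IsIntervalPartitionOf I A)
    (hIL : Refines I L) : Refines I (restrictIP L A) := by
  intro B hB
  obtain ⟨C, hC, hBC⟩ := hIL B hB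
  have hBI := hI.1.2.1 B hB
  have hBA : B ⊆ A := hI.2 ▸ subset_sUnion_of_mem hB
  obtain ⟨x, hx⟩ := hBI.1
  have hsub : B ⊆ C ∩ {y | y ∈ A ∧ cliqueRel A x y} := by
    refine fun z hz => ⟨hBC hz, hBA hz, (cliqueRel_iff (hBA hx)).2 fun y hy => hBA ?_⟩
    rcases mem_uIcc.1 hy with h | h
    · exact hBI.2.2 x hx z hz y h.1 h.2
    · exact hBI.2.2 z hz x hx y h.1 h.2
  exact ⟨_, ⟨nonempty_iff_ne_empty.1 ⟨x, hsub hx⟩, C, hC, _, ⟨x, hBA hx, rfl⟩, rfl⟩, hsub⟩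

/-- The subsets counted by `IPC L s` are the ground sets of the interval partitions that
refine `L` and standardize to `s`. -/
lemma mem_IPC_iff {L s : Set (Set ℕ)} {A : Set ℕ} (hL : IsStdIP L) (hs : IsStdIP s) :
    (A ⊆ ⋃₀ L ∧ IPle s (stdIP (restrictIP L A))) ↔
      ∃ I, IsIntervalPartitionOf I A ∧ stdIP I = s ∧ Refines I L := by
  constructor
  · rintro ⟨hA, hU, href⟩
    have hfin : A.Finite := hL.1.1.subset hA
    rw [stdIP_eq, sUnion_restrictIP hA] at hU href
    rw [sUnion_mapF, sUnion_restrictIP hA] at hU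
    have hmono : StrictMonoOn (unstd A) (⋃₀ s) := hU ▸ unstd_strictMonoOn hfin
    have hDA : ∀ D ∈ restrictIP L A, D ⊆ A := fun D hD => by
      conv_rhs => rw [← sUnion_restrictIP hA]
      exact subset_sUnion_of_mem hD
    refine ⟨pull A s, ⟨isIntervalPartition_mapF hs.1 hmono.injOn ?_, ?_⟩, ?_, ?_⟩
    · intro B hB
      obtain ⟨_, ⟨D, hD, rfl⟩, hBD⟩ := href B hB
      exact isIntervalBlock_unstd_image hfin (hs.1.2.1 B hB)
        (isIntervalBlock_of_mem_restrictIP hL.1 hD) (hDA D hD) hBD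
    · rw [pull, sUnion_mapF, hU, unstd_image_stdMap_image hfin subset_rfl]
    · rw [pull, stdIP_mapF hmono, stdIP_self hs]
    · rintro _ ⟨B, hB, rfl⟩
      obtain ⟨_, ⟨D, hD, rfl⟩, hBD⟩ := href B hB
      have hDA := hDA D hD
      obtain ⟨-, C, hC, c, -, rfl⟩ := hD
      refine ⟨C, hC, (image_mono hBD).trans ?_⟩
      dsimp only
      rw [unstd_image_stdMap_image hfin hDA]
      exact inter_subset_left
  · rintro ⟨I, hI, rfl, hIL⟩
    have hA : A ⊆ ⋃₀ L := by
      rw [← hI.2]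
      refine sUnion_subset fun B hB => ?_
      obtain ⟨C, hC, hBC⟩ := hIL B hB
      exact hBC.trans (subset_sUnion_of_mem hC)
    refine ⟨hA, ?_⟩
    rw [stdIP_eq (restrictIP L A), sUnion_restrictIP hA, stdIP_eq, hI.2]
    refine ⟨?_, ?_⟩
    · rw [sUnion_mapF, sUnion_mapF, hI.2, sUnion_restrictIP hA]
    · rintro _ ⟨B, hB, rfl⟩
      obtain ⟨D, hD, hBD⟩ := refines_restrictIP hI hIL B hB
      exact ⟨_, ⟨D, hD, rfl⟩, image_mono hBD⟩

/-! ### The bijection -/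

/-- The set counted by `IPC L s`. -/
def ipcSet (L s : Set (Set ℕ)) : Set (Set ℕ) :=
  {A : Set ℕ | A ⊆ ⋃₀ L ∧ IPle s (stdIP (restrictIP L A))}

/-- The set counted by `secCoeff s t g`. -/
def secSet (s t g : Set (Set ℕ)) : Set (Set ℕ × Set ℕ) :=
  {p : Set ℕ × Set ℕ | p.1 ∪ p.2 = ⋃₀ g ∧
      ∃ I I' : Set (Set ℕ), IsIntervalPartitionOf I p.1 ∧ IsIntervalPartitionOf I' p.2 ∧
        stdIP I = s ∧ stdIP I' = t ∧ glue I I' = g}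

/-- The standardized gluing of the lifts of `s` and `t` to the two members of a pair. -/
noncomputable def glueType (s t : Set (Set ℕ)) (p : Set ℕ × Set ℕ) : Set (Set ℕ) :=
  stdIP (glue (pull p.1 s) (pull p.2 t))

lemma finite_ipcSet {L : Set (Set ℕ)} (hL : IsStdIP L) (s : Set (Set ℕ)) :
    (ipcSet L s).Finite :=
  hL.1.1.finite_subsets.subset fun _ hA => hA.1

lemma mem_fiber_iff {L s t g : Set (Set ℕ)} (hL : IsStdIP L) (hs : IsStdIP s) (ht : IsStdIP t)
    (p : Set ℕ × Set ℕ) :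
    (p ∈ ipcSet L s ×ˢ ipcSet L t ∧ glueType s t p = g) ↔
      ∃ I I', IsIntervalPartitionOf I p.1 ∧ IsIntervalPartitionOf I' p.2 ∧
        stdIP I = s ∧ stdIP I' = t ∧ Refines I L ∧ Refines I' L ∧ stdIP (glue I I') = g := by
  constructor
  · rintro ⟨⟨h1, h2⟩, h3⟩
    obtain ⟨I, hI, hIs, hIL⟩ := (mem_IPC_iff hL hs).1 h1
    obtain ⟨I', hI', hIs', hIL'⟩ := (mem_IPC_iff hL ht).1 h2
    refine ⟨I, I', hI, hI', hIs, hIs', hIL, hIL', ?_⟩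
    rwa [eq_pull hI hIs, eq_pull hI' hIs']
  · rintro ⟨I, I', hI, hI', hIs, hIs', hIL, hIL', h⟩
    refine ⟨⟨(mem_IPC_iff hL hs).2 ⟨I, hI, hIs, hIL⟩,
      (mem_IPC_iff hL ht).2 ⟨I', hI', hIs', hIL'⟩⟩, ?_⟩
    rw [glueType, ← eq_pull hI hIs, ← eq_pull hI' hIs']
    exact h

/-- Pulling a partition `i` of a subset of `[|C|]` back to `C ⊆ ℕ`, when `i` refines the
standardization of a partition `G` of `C` that refines `L`. -/
lemma lift_partition {L G i : Set (Set ℕ)} {a C : Set ℕ} (hG : IsIntervalPartitionOf G C)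
    (hGL : Refines G L) (hi : IsIntervalPartitionOf i a) (hiG : Refines i (stdIP G)) :
    IsIntervalPartitionOf (mapF (unstd C) i) (unstd C '' a) ∧
      stdIP (mapF (unstd C) i) = stdIP i ∧ Refines (mapF (unstd C) i) L := by
  obtain ⟨hG, rfl⟩ := hG
  obtain ⟨hi, rfl⟩ := hi
  have hblock : ∀ B ∈ i, ∃ D ∈ G, B ⊆ stdMap (⋃₀ G) '' D := by
    intro B hB
    obtain ⟨_, ⟨D, hD, rfl⟩, hBD⟩ := hiG B hB
    exact ⟨D, hD, hBD⟩
  have hsub : ⋃₀ i ⊆ stdMap (⋃₀ G) '' ⋃₀ G := by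
    refine sUnion_subset fun B hB => ?_
    obtain ⟨D, hD, hBD⟩ := hblock B hB
    exact hBD.trans (image_mono (subset_sUnion_of_mem hD))
  have hmono := (unstd_strictMonoOn hG.1).mono hsub
  refine ⟨⟨isIntervalPartition_mapF hi hmono.injOn ?_, sUnion_mapF _ _⟩, stdIP_mapF hmono, ?_⟩
  · intro B hB
    obtain ⟨D, hD, hBD⟩ := hblock B hB
    exact isIntervalBlock_unstd_image hG.1 (hi.2.1 B hB) (hG.2.1 D hD)
      (subset_sUnion_of_mem hD) hBD
  · rintro _ ⟨B, hB, rfl⟩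
    obtain ⟨D, hD, hBD⟩ := hblock B hB
    obtain ⟨C, hC, hDC⟩ := hGL D hD
    refine ⟨C, hC, (image_mono hBD).trans ?_⟩
    rwa [unstd_image_stdMap_image hG.1 (subset_sUnion_of_mem hD)]

lemma mapsTo_lift {L s t g : Set (Set ℕ)} (hL : IsStdIP L) (hs : IsStdIP s) (ht : IsStdIP t)
    (hg : IsStdIP g) {C a a' : Set ℕ} (hp : (a, a') ∈ secSet s t g) (hC : C ∈ ipcSet L g) :
    (unstd C '' a, unstd C '' a') ∈ ipcSet L s ×ˢ ipcSet L t ∧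
      glueType s t (unstd C '' a, unstd C '' a') = g := by
  rw [mem_fiber_iff hL hs ht]
  obtain ⟨haa, i, i', hi, hi', hsi, hti, hgl⟩ := hp
  obtain ⟨G, hG, rfl, hGL⟩ := (mem_IPC_iff hL hg).1 hC
  obtain ⟨h1, h2, h3⟩ := lift_partition hG hGL hi (hgl ▸ refines_glue_left i i')
  obtain ⟨h1', h2', h3'⟩ := lift_partition hG hGL hi' (hgl ▸ refines_glue_right i i')
  refine ⟨_, _, h1, h1', h2.trans hsi, h2'.trans hti, h3, h3', ?_⟩
  obtain ⟨hG, rfl⟩ := hG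
  have hback : mapF (unstd (⋃₀ G)) (stdIP G) = G := mapF_leftInv fun x hx => unstd_stdMap hG.1 hx
  rw [glue_mapF, hgl, hback]
  have : ⋃₀ (i ∪ i') = stdMap (⋃₀ G) '' ⋃₀ G := by
    rw [← sUnion_mapF, ← stdIP_eq, ← hgl, sUnion_glue, sUnion_union]
  rw [this]
  exact (unstd_strictMonoOn hG.1).injOn

lemma sUnion_eq_of_mem_ipcSet {L g : Set (Set ℕ)} (hL : IsStdIP L) (hg : IsStdIP g) {C : Set ℕ}
    (hC : C ∈ ipcSet L g) : C.Finite ∧ ⋃₀ g = stdMap C '' C := by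
  obtain ⟨G, ⟨hG, rfl⟩, rfl, hGL⟩ := (mem_IPC_iff hL hg).1 hC
  exact ⟨hG.1, sUnion_mapF _ _⟩

/-- The fibre of `glueType s t` over `g` is in bijection with `secSet s t g ×ˢ ipcSet L g`. -/
lemma bijOn_lift {L s t g : Set (Set ℕ)} (hL : IsStdIP L) (hs : IsStdIP s) (ht : IsStdIP t)
    (hg : IsStdIP g) :
    BijOn (fun q : (Set ℕ × Set ℕ) × Set ℕ => (unstd q.2 '' q.1.1, unstd q.2 '' q.1.2))
      (secSet s t g ×ˢ ipcSet L g)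
      {p | p ∈ ipcSet L s ×ˢ ipcSet L t ∧ glueType s t p = g} := by
  refine ⟨fun q hq => mapsTo_lift hL hs ht hg hq.1 hq.2, ?_, ?_⟩
  · rintro ⟨⟨a, a'⟩, C⟩ ⟨ha, hC⟩ ⟨⟨b, b'⟩, D⟩ ⟨hb, hD⟩ heq
    obtain ⟨h1, h2⟩ := Prod.mk.inj heq
    obtain ⟨hCf, hCg⟩ := sUnion_eq_of_mem_ipcSet hL hg hC
    obtain ⟨hDf, hDg⟩ := sUnion_eq_of_mem_ipcSet hL hg hD
    have hau : a ∪ a' = ⋃₀ g := ha.1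
    have hbu : b ∪ b' = ⋃₀ g := hb.1
    dsimp only at h1 h2 hC hD hCf hCg hDf hDg
    -- the union of the two lifted sets recovers the ground set
    have hCD : C = D := by
      rw [← unstd_image_stdMap_image hCf subset_rfl, ← hCg, ← hau, image_union, h1, h2,
        ← image_union, hbu, hDg, unstd_image_stdMap_image hDf subset_rfl]
    subst hCD
    have hinj : InjOn (unstd C) (⋃₀ g) := hCg ▸ (unstd_strictMonoOn hCf).injOn
    have e1 : a = b := (hinj.image_eq_image_iff (hau ▸ subset_union_left)
      (hbu ▸ subset_union_left)).1 h1
    have e2 : a' = b' := (hinj.image_eq_image_iff (hau ▸ subset_union_right)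
      (hbu ▸ subset_union_right)).1 h2
    rw [e1, e2]
  · rintro ⟨A, A'⟩ hp
    obtain ⟨I, I', hI, hI', hIs, hIs', hIL, hIL', hgl⟩ := (mem_fiber_iff hL hs ht _).1 hp
    dsimp only at hI hI'
    have hG := isIntervalPartition_glue hI.1 hI'.1
    have hU : ⋃₀ glue I I' = A ∪ A' := by rw [sUnion_glue, hI.2, hI'.2]
    have hfin : (A ∪ A').Finite := hU ▸ hG.1
    have hmono := stdMap_strictMonoOn hfin
    have hstd : mapF (stdMap (A ∪ A')) (glue I I') = g := by rw [← hgl, stdIP_eq, hU]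
    refine ⟨((stdMap (A ∪ A') '' A, stdMap (A ∪ A') '' A'), A ∪ A'), ⟨?_, ?_⟩, ?_⟩
    · refine ⟨?_, mapF (stdMap (A ∪ A')) I, mapF (stdMap (A ∪ A')) I', ⟨?_, ?_⟩, ⟨?_, ?_⟩,
        ?_, ?_, ?_⟩
      · dsimp only
        rw [← hstd, sUnion_mapF, hU, image_union]
      · exact isIntervalPartition_mapF_stdMap hI.1 hfin (hI.2 ▸ subset_union_left)
      · rw [sUnion_mapF, hI.2]
      · exact isIntervalPartition_mapF_stdMap hI'.1 hfin (hI'.2 ▸ subset_union_right)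
      · rw [sUnion_mapF, hI'.2]
      · rw [stdIP_mapF (hmono.mono (hI.2 ▸ subset_union_left)), hIs]
      · rw [stdIP_mapF (hmono.mono (hI'.2 ▸ subset_union_right)), hIs']
      · rw [glue_mapF, hstd]
        rw [sUnion_union, hI.2, hI'.2]
        exact hmono.injOn
    · exact (mem_IPC_iff hL hg).2 ⟨glue I I', ⟨hG, hU⟩, hgl,
        refines_glue hL.1 hIL hIL'⟩
    · exact Prod.ext (unstd_image_stdMap_image hfin subset_union_left)
        (unstd_image_stdMap_image hfin subset_union_right)

lemma ncard_fiber {L s t g : Set (Set ℕ)} (hL : IsStdIP L) (hs : IsStdIP s) (ht : IsStdIP t)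
    (hg : IsStdIP g) :
    {p | p ∈ ipcSet L s ×ˢ ipcSet L t ∧ glueType s t p = g}.ncard
      = secCoeff s t g * IPC L g := by
  have h := bijOn_lift hL hs ht hg
  rw [← h.image_eq, InjOn.ncard_image h.injOn, ncard_prod]
  rfl

/-- character property of the interval-partition signature. -/
theorem IPC_characterProperty (L s t : Set (Set ℕ))
    (hL : IsStdIP L) (hs : IsStdIP s) (ht : IsStdIP t) :
    IPC L s * IPC L t
        = (∑ᶠ g ∈ {g : Set (Set ℕ) | IsStdIP g}, secCoeff s t g * IPC L g) ∧
      {g : Set (Set ℕ) | IsStdIP g ∧ secCoeff s t g * IPC L g ≠ 0}.Finite := by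
  classical
  have hXfin : (ipcSet L s ×ˢ ipcSet L t).Finite := (finite_ipcSet hL s).prod (finite_ipcSet hL t)
  have hstd : ∀ p ∈ ipcSet L s ×ˢ ipcSet L t, IsStdIP (glueType s t p) := by
    intro p hp
    obtain ⟨I, I', hI, hI', -, -, -, -, h⟩ := (mem_fiber_iff hL hs ht p).1 ⟨hp, rfl⟩
    exact h ▸ isStdIP_stdIP (isIntervalPartition_glue hI.1 hI'.1)
  have hsupp : ∀ g, IsStdIP g → secCoeff s t g * IPC L g ≠ 0 →
      g ∈ glueType s t '' (ipcSet L s ×ˢ ipcSet L t) := by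
    intro g hg hne
    rw [← ncard_fiber hL hs ht hg] at hne
    obtain ⟨p, hp⟩ := nonempty_of_ncard_ne_zero hne
    exact ⟨p, hp⟩
  refine ⟨?_, (hXfin.image (glueType s t)).subset fun g hg => hsupp g hg.1 hg.2⟩
  have hsum : (∑ᶠ g ∈ {g : Set (Set ℕ) | IsStdIP g}, secCoeff s t g * IPC L g)
      = ∑ g ∈ hXfin.toFinset.image (glueType s t), secCoeff s t g * IPC L g := by
    refine finsum_mem_eq_sum_of_inter_support_eq _ ?_
    ext g
    simp only [mem_inter_iff, mem_ofPred_eq, Function.mem_support, Finset.coe_image,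
      Finite.coe_toFinset]
    constructor
    · exact fun h => ⟨hsupp g h.1 h.2, h.2⟩
    · rintro ⟨⟨p, hp, rfl⟩, h⟩
      exact ⟨hstd p hp, h⟩
  rw [hsum]
  have hprod : IPC L s * IPC L t = (ipcSet L s ×ˢ ipcSet L t).ncard := ncard_prod.symm
  rw [hprod, ncard_eq_toFinset_card _ hXfin, Finset.card_eq_sum_card_image (glueType s t)]
  refine Finset.sum_congr rfl fun g hg => ?_
  obtain ⟨p, hp, rfl⟩ := Finset.mem_image.1 hg
  rw [← ncard_fiber hL hs ht (hstd p (hXfin.mem_toFinset.1 hp)), ← ncard_coe_finset]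
  congr 1
  ext q
  simp
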